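/- Let V be an abelian group with an 𝔈(r)-representation. Set W := {v ∈ V : P_{a,i}(v) = 0 for all a > 0 and i ∈ [r], and Q_{a,i}(v) = 0 for all a ≤ 0 and i ∈ [r]}, 𝓗_∞(V) := {v ∈ V : there exists m with P_{a,i}(v) = 0 for all a > m and i ∈ [r]}, and 𝓚_{−∞}(V) := {v ∈ V : there exists m with Q_{a,i}(v) = 0 for all a ≤ m and i ∈ [r]}. For each r-Maya diagram 𝔪, choose N ≥ 1 with I_a = ∅ for all a > N and I_a = [r] for all a ≤ −N, and define the additive endomorphism Θ_𝔪 := λ_𝔪 · Q_{N,I_N} ∘ ⋯ ∘ Q_{2,I_2} ∘ Q_{1,I_1} ∘ P_{0,[r]∖I_0} ∘ P_{−1,[r]∖I_{−1}} ∘ ⋯ ∘ P_{−N,[r]∖I_{−N}} of V, where λ_𝔪 := (−1)^{Σ_{k≤0} k·r·(r−|I_k|)}; this is independent of the choice of N since Q_{a,∅} = P_{a,∅} = id_V. Then the ℤ-linear map from the direct sum ⊕_𝔪 W (indexed by all r-Maya diagrams 𝔪) to V sending (w_𝔪)_𝔪 to Σ_𝔪 Θ_𝔪(w_𝔪) is injective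 with image exactly 𝓚_{−∞}(V) ∩ 𝓗_∞(V). -/

import Mathlib

/-- The ordered product `Q_{a,I} = Q_{a,a_0} ∘ ⋯ ∘ Q_{a,a_k}` for `I = {a_0 < ⋯ < a_k}`. -/
def qaProd {r : ℕ} {V : Type*} [AddCommGroup V] (Q : ℤ → Fin r → AddMonoid.End V)
    (a : ℤ) (I : Finset (Fin r)) : AddMonoid.End V :=
  ((I.sort (· ≤ ·)).map (Q a)).prod

/-- The ordered product `P_{a,I} = P_{a,a_k} ∘ ⋯ ∘ P_{a,a_0}` for `I = {a_0 < ⋯ < a_k}`. -/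
def paProd {r : ℕ} {V : Type*} [AddCommGroup V] (P : ℤ → Fin r → AddMonoid.End V)
    (a : ℤ) (I : Finset (Fin r)) : AddMonoid.End V :=
  ((I.sort (· ≤ ·)).reverse.map (P a)).prod

/-- An `𝔈(r)`-representation on an abelian group `V`: operators `P_{a,i}`, `Q_{a,i}`
and a pair of mutually inverse shifts `E`, `F = E⁻¹`, subject to the defining relations
of the infinite-dimensional Clifford algebra `𝔈(r)`. -/
structure ERep (r : ℕ) (V : Type*) [AddCommGroup V] where
  P : ℤ → Fin r → AddMonoid.End V
  Q : ℤ → Fin r → AddMonoid.End V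
  E : AddMonoid.End V
  F : AddMonoid.End V
  EF_eq : E * F = 1
  FE_eq : F * E = 1
  P_sq : ∀ (a : ℤ) (i : Fin r), P a i * P a i = 0
  Q_sq : ∀ (a : ℤ) (i : Fin r), Q a i * Q a i = 0
  E_P : ∀ (a : ℤ) (i : Fin r), E * P a i = P (a - 1) i * E
  E_Q : ∀ (a : ℤ) (i : Fin r), E * Q a i = Q (a - 1) i * E
  P_P : ∀ (a b : ℤ) (i j : Fin r), P a i * P b j + P b j * P a i = 0
  Q_Q : ∀ (a b : ℤ) (i j : Fin r), Q a i * Q b j + Q b j * Q a i = 0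
  P_Q : ∀ (a b : ℤ) (i j : Fin r),
    P a i * Q b j + Q b j * P a i = if i = j ∧ a = b then 1 else 0

/-- An `r`-Maya diagram: a function `ℤ → Finset (Fin r)` which is eventually the full set
`[r]` in the negative direction and eventually empty in the positive direction. -/
structure MayaDiagram (r : ℕ) where
  idx : ℤ → Finset (Fin r)
  eventually_full : ∃ N : ℤ, ∀ a : ℤ, a < N → idx a = Finset.univ
  eventually_empty : ∃ N : ℤ, ∀ a : ℤ, N < a → idx a = ∅

/-- `N` is an admissible cutoff for the Maya diagram `m`: `N ≥ 1`, `I_a = ∅` for `a > N`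
and `I_a = [r]` for `a ≤ −N`. -/
def GoodCutoff {r : ℕ} (m : MayaDiagram r) (N : ℕ) : Prop :=
  1 ≤ N ∧ (∀ a : ℤ, (N : ℤ) < a → m.idx a = ∅) ∧
    (∀ a : ℤ, a ≤ -(N : ℤ) → m.idx a = Finset.univ)

/-- The sign `λ_m = (−1)^{Σ_{k≤0} k·r·(r−|I_k|)}` (written with the nonnegative exponent
`Σ_{k≤0} (−k)·r·(r−|I_k|)`, which yields the same sign). -/
noncomputable def mayaSign {r : ℕ} (m : MayaDiagram r) : ℤ :=
  (-1 : ℤ) ^ (∑ᶠ k ∈ {k : ℤ | k ≤ 0}, ((-k).toNat * r * (r - (m.idx k).card)))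

/-- The operator
`Θ_m := λ_m · Q_{N,I_N} ∘ ⋯ ∘ Q_{1,I_1} ∘ P_{0,[r]∖I_0} ∘ ⋯ ∘ P_{−N,[r]∖I_{−N}}`. -/
noncomputable def Theta {r : ℕ} {V : Type*} [AddCommGroup V] (ρ : ERep r V)
    (m : MayaDiagram r) (N : ℕ) : AddMonoid.End V :=
  mayaSign m •
    (((List.range N).map (fun t => qaProd ρ.Q ((N : ℤ) - t) (m.idx ((N : ℤ) - t)))).prod *
      ((List.range (N + 1)).map
        (fun t => paProd ρ.P (-(t : ℤ)) (Finset.univ \ m.idx (-(t : ℤ))))).prod)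

/-!
Split the generators into annihilators (`P_{a,i}` for `a > 0`, `Q_{a,i}` for `a ≤ 0`) and creators
(the others). They satisfy the canonical anticommutation relations with modes `x = (a, i)`, and `W`
is the space of vacuum vectors. Recording where a Maya diagram differs from the vacuum diagram
identifies Maya diagrams with finite sets of modes, and `Θ_𝔪` is, up to sign, the product of the
creators over the corresponding set.

Applying the annihilators of a set `S` to a sum of created vectors kills every term whose set does
not contain `S`; choosing `S` maximal among the sets that occur isolates one vacuum vector, which
gives injectivity. Conversely, a vector annihilated by all but finitely many annihilators is
decomposed one mode at a time by means of `1 = a x * c x + c x * a x`.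
-/

/-- The canonical anticommutation relations for annihilators `a` and creators `c` indexed by a
set of modes `κ`, in an arbitrary ring. -/
structure IsCAR {κ R : Type*} [Ring R] (a c : κ → R) : Prop where
  ann_sq : ∀ x, a x * a x = 0
  cre_sq : ∀ x, c x * c x = 0
  ann_mul_ann : ∀ x y, a x * a y = -(a y * a x)
  cre_mul_cre : ∀ x y, c x * c y = -(c y * c x)
  ann_mul_cre : ∀ x y, x ≠ y → a x * c y = -(c y * a x)
  ann_mul_cre_self_add : ∀ x, a x * c x + c x * a x = 1

/-- The vacuum vectors of an `R`-module `V`: those killed by all the annihilators `a x`. -/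
def vacuum {κ R : Type*} [Ring R] (a : κ → R) (V : Type*) [AddCommGroup V] [Module R V] :
    AddSubgroup V where
  carrier := {v | ∀ x, a x • v = 0}
  zero_mem' _ := smul_zero _
  add_mem' hv hw x := by rw [smul_add, hv x, hw x, add_zero]
  neg_mem' hv x := by rw [smul_neg, hv x, neg_zero]

/-- `t` is, up to sign, the product of the `c x` over `x ∈ S`, each taken once, in some order.
For anticommuting `c` this determines `t` up to sign, so that no order on `κ` has to be fixed.
The multiset equation says that `l` lists the elements of `S` without repetition. -/
def IsSignedProduct {κ R : Type*} [Ring R] (c : κ → R) (S : Finset κ) (t : R) : Prop :=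
  ∃ l : List κ, (l : Multiset κ) = S.val ∧ ∃ ε : ℤˣ, t = ε • (l.map c).prod

/-- The additive map `⊕_m W → V`, `(w_m)_m ↦ Σ_m T_m w_m`, with the direct sum encoded as
`M →₀ W`. -/
noncomputable def sumSMulHom {M R V : Type*} [Ring R] [AddCommGroup V] [Module R V] (T : M → R)
    (W : AddSubgroup V) : (M →₀ W) →+ V :=
  Finsupp.liftAddHom fun m => (DistribSMul.toAddMonoidHom V (T m)).comp W.subtype

theorem pairwise_disjoint_singleton_product {ι α β : Type*} {f : ι → α}
    (hf : Function.Injective f) (I : ι → Finset β) :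
    Pairwise (Function.onFun Disjoint fun t => {f t} ×ˢ I t) :=
  fun _ _ hst => Finset.disjoint_product.2 (.inl (Finset.disjoint_singleton.2 (hf.ne hst)))

section SignedProduct

variable {κ R : Type*} [Ring R] {c : κ → R} {S S' : Finset κ} {s t : R}

theorem exists_prod_map_eq_units_smul_of_perm (hc : ∀ x y, c x * c y = -(c y * c x))
    {l l' : List κ} (p : l.Perm l') : ∃ ε : ℤˣ, (l.map c).prod = ε • (l'.map c).prod := by
  induction p with
  | nil => exact ⟨1, (one_smul _ _).symm⟩
  | cons x _ ih =>
    obtain ⟨ε, ih⟩ := ih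
    exact ⟨ε, by rw [List.map_cons, List.prod_cons, ih, mul_smul_comm, ← List.prod_cons,
      ← List.map_cons]⟩
  | swap x y l =>
    refine ⟨-1, ?_⟩
    simp only [List.map_cons, List.prod_cons, ← mul_assoc, hc y x, neg_mul, Units.neg_smul,
      one_smul]
  | trans _ _ ih₁ ih₂ =>
    obtain ⟨ε₁, h₁⟩ := ih₁
    obtain ⟨ε₂, h₂⟩ := ih₂
    exact ⟨ε₁ * ε₂, by rw [h₁, h₂, mul_smul]⟩

namespace IsSignedProduct

theorem exists_eq_units_smul (hc : ∀ x y, c x * c y = -(c y * c x)) (hs : IsSignedProduct c S s)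
    (ht : IsSignedProduct c S t) : ∃ ε : ℤˣ, s = ε • t := by
  obtain ⟨l, hl, ε, rfl⟩ := hs
  obtain ⟨l', hl', ε', rfl⟩ := ht
  obtain ⟨η, hη⟩ := exists_prod_map_eq_units_smul_of_perm hc
    (Multiset.coe_eq_coe.1 (hl.trans hl'.symm))
  exact ⟨ε * η * ε'⁻¹, by rw [hη, smul_smul, smul_smul, inv_mul_cancel_right]⟩

theorem prod_map {l : List κ} (hl : (l : Multiset κ) = S.val) :
    IsSignedProduct c S (l.map c).prod :=
  ⟨l, hl, 1, (one_smul _ _).symm⟩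

theorem prod_map_mk {α β : Type*} {c : α × β → R} (a : α) {I : Finset β} {l : List β}
    (hl : (l : Multiset β) = I.val) :
    IsSignedProduct c ({a} ×ˢ I) (l.map fun b => c (a, b)).prod := by
  have modes_eq : (l.map (Prod.mk a) : Multiset (α × β)) = ({a} ×ˢ I : Finset (α × β)).val := by
    rw [Finset.singleton_product, Finset.map_val, ← hl]
    rfl
  simpa only [List.map_map, Function.comp_def] using prod_map (c := c) modes_eq

theorem units_smul (ht : IsSignedProduct c S t) (η : ℤˣ) : IsSignedProduct c S (η • t) := by
  obtain ⟨l, hl, ε, rfl⟩ := ht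
  exact ⟨l, hl, η * ε, smul_smul _ _ _⟩

theorem mul [DecidableEq κ] (hs : IsSignedProduct c S s) (ht : IsSignedProduct c S' t)
    (hSS' : Disjoint S S') : IsSignedProduct c (S ∪ S') (s * t) := by
  obtain ⟨l, hl, ε, rfl⟩ := hs
  obtain ⟨l', hl', ε', rfl⟩ := ht
  refine ⟨l ++ l', ?_, ε * ε', ?_⟩
  · rw [← Multiset.coe_add, hl, hl', ← Finset.disjUnion_eq_union S S' hSS', Finset.disjUnion_val]
  · rw [List.map_append, List.prod_append, smul_mul_smul_comm]

theorem prod_range [DecidableEq κ] {S : ℕ → Finset κ} {t : ℕ → R}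
    (hS : Pairwise (Function.onFun Disjoint S)) (N : ℕ)
    (ht : ∀ n < N, IsSignedProduct c (S n) (t n)) :
    IsSignedProduct c ((Finset.range N).biUnion S) ((List.range N).map t).prod := by
  induction N with
  | zero => exact prod_map (l := []) rfl
  | succ N ih =>
    rw [List.prod_range_succ, Finset.range_add_one, Finset.biUnion_insert, Finset.union_comm]
    refine (ih fun n hn => ht n (hn.trans N.lt_succ_self)).mul (ht N N.lt_succ_self) ?_
    exact (Finset.disjoint_biUnion_left _ _ _).2 fun n hn => hS (Finset.mem_range.1 hn).ne

end IsSignedProduct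

end SignedProduct

namespace IsCAR

variable {κ R : Type*} [Ring R] {a c : κ → R} {x y : κ}

theorem cre_mul_ann (h : IsCAR a c) (hxy : x ≠ y) : c x * a y = -(a y * c x) := by
  rw [h.ann_mul_cre y x hxy.symm, neg_neg]

theorem particleHole (h : IsCAR a c) (p : κ → Prop) [DecidablePred p] :
    IsCAR (fun x => if p x then a x else c x) (fun x => if p x then c x else a x) where
  ann_sq x := by
    split_ifs
    exacts [h.ann_sq x, h.cre_sq x]
  cre_sq x := by
    split_ifs
    exacts [h.cre_sq x, h.ann_sq x]
  ann_mul_ann x y := by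
    split_ifs with hx hy hy
    · exact h.ann_mul_ann x y
    · exact h.ann_mul_cre x y (by rintro rfl; exact hy hx)
    · exact h.cre_mul_ann (by rintro rfl; exact hx hy)
    · exact h.cre_mul_cre x y
  cre_mul_cre x y := by
    split_ifs with hx hy hy
    · exact h.cre_mul_cre x y
    · exact h.cre_mul_ann (by rintro rfl; exact hy hx)
    · exact h.ann_mul_cre x y (by rintro rfl; exact hx hy)
    · exact h.ann_mul_ann x y
  ann_mul_cre x y hxy := by
    split_ifs
    · exact h.ann_mul_cre x y hxy
    · exact h.ann_mul_ann x y
    · exact h.cre_mul_cre x y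
    · exact h.cre_mul_ann hxy
  ann_mul_cre_self_add x := by
    split_ifs
    · exact h.ann_mul_cre_self_add x
    · rw [add_comm, h.ann_mul_cre_self_add x]

variable {V : Type*} [AddCommGroup V] [Module R V] {v : V} {l : List κ}

theorem ann_smul_ann_smul_eq_zero (h : IsCAR a c) (y : κ) (hv : a x • v = 0) :
    a x • a y • v = 0 := by
  rw [smul_smul, h.ann_mul_ann, neg_smul, mul_smul, hv, smul_zero, neg_zero]

theorem ann_smul_cre_smul_eq_zero (h : IsCAR a c) (hxy : x ≠ y) (hv : a x • v = 0) :
    a x • c y • v = 0 := by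
  rw [smul_smul, h.ann_mul_cre x y hxy, neg_smul, mul_smul, hv, smul_zero, neg_zero]

theorem ann_smul_prod_cre_smul_eq_zero (h : IsCAR a c) (hx : x ∉ l) (hv : a x • v = 0) :
    a x • (l.map c).prod • v = 0 := by
  induction l with
  | nil => simpa using hv
  | cons y l ih =>
    rw [List.mem_cons, not_or] at hx
    rw [List.map_cons, List.prod_cons, mul_smul]
    exact h.ann_smul_cre_smul_eq_zero hx.1 (ih hx.2)

theorem prod_ann_smul_eq_zero (h : IsCAR a c) (hx : x ∈ l) (hv : a x • v = 0) :
    (l.map a).prod • v = 0 := by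
  induction l using List.reverseRecOn generalizing v with
  | nil => simp at hx
  | append_singleton l y ih =>
    rw [List.map_append, List.map_singleton, List.prod_append, List.prod_singleton, mul_smul]
    rcases List.mem_append.1 hx with hx | hx
    · exact ih hx (h.ann_smul_ann_smul_eq_zero y hv)
    · rw [← List.mem_singleton.1 hx, hv, smul_zero]

theorem prod_ann_smul_prod_cre_smul (h : IsCAR a c) (hl : l.Nodup) (hv : v ∈ vacuum a V) :
    (l.reverse.map a).prod • (l.map c).prod • v = v := by
  induction l with
  | nil => simp
  | cons x l ih =>
    obtain ⟨hx, hl⟩ := List.nodup_cons.1 hl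
    have ann_cre : a x • c x • (l.map c).prod • v = (l.map c).prod • v := by
      rw [smul_smul, eq_sub_of_add_eq (h.ann_mul_cre_self_add x), sub_smul, one_smul, mul_smul,
        h.ann_smul_prod_cre_smul_eq_zero hx (hv x), smul_zero, sub_zero]
    rw [List.reverse_cons, List.map_append, List.map_singleton, List.prod_append,
      List.prod_singleton, List.map_cons, List.prod_cons, mul_smul, mul_smul, ann_cre, ih hl]

variable {S : Finset κ} {t : R}

theorem ann_smul_signedProduct_smul_eq_zero (h : IsCAR a c) (ht : IsSignedProduct c S t)
    (hx : x ∉ S) (hv : a x • v = 0) : a x • t • v = 0 := by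
  obtain ⟨l, hl, ε, rfl⟩ := ht
  have hxl : x ∉ l := by rwa [← Multiset.mem_coe, hl]
  rw [smul_assoc, smul_comm, h.ann_smul_prod_cre_smul_eq_zero hxl hv, smul_zero]

theorem exists_dual (h : IsCAR a c) (ht : IsSignedProduct c S t) (V : Type*) [AddCommGroup V]
    [Module R V] : ∃ d : R, (∀ v ∈ vacuum a V, d • t • v = v) ∧
      ∀ x ∈ S, ∀ v : V, a x • v = 0 → d • v = 0 := by
  obtain ⟨l, hl, ε, rfl⟩ := ht
  have nodup : l.Nodup := Multiset.coe_nodup.1 (hl ▸ S.nodup)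
  refine ⟨ε⁻¹ • (l.reverse.map a).prod, fun v hv => ?_, fun x hx v hv => ?_⟩
  · rw [smul_assoc, smul_assoc, smul_comm _ ε, inv_smul_smul,
      h.prod_ann_smul_prod_cre_smul nodup hv]
  · have hxl : x ∈ l.reverse := by rwa [List.mem_reverse, ← Multiset.mem_coe, hl]
    rw [smul_assoc, h.prod_ann_smul_eq_zero hxl hv, smul_zero]

theorem mem_of_forall_prod_cre_smul_mem (h : IsCAR a c) {U : AddSubgroup V}
    (hU : ∀ l : List κ, l.Nodup → ∀ w ∈ vacuum a V, (l.map c).prod • w ∈ U)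
    (hv : {x | a x • v ≠ 0}.Finite) : v ∈ U := by
  classical
  -- The creators of the modes already treated are carried along as a prefix `l`.
  suffices key : ∀ (B : Finset κ) (l : List κ), l.Nodup → (∀ x ∈ l, x ∉ B) →
      ∀ v : V, (∀ x ∉ B, a x • v = 0) → (l.map c).prod • v ∈ U by
    simpa using key hv.toFinset [] List.nodup_nil (by simp) v (by simp)
  intro B
  induction B using Finset.induction_on with
  | empty => exact fun l hl _ v hv => hU l hl v fun x => hv x (Finset.notMem_empty x)
  | insert x B hx ih =>
    intro l hl hlB v hv
    simp only [Finset.mem_insert, not_or] at hlB hv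
    have ann_ann : ∀ (u : V) (y : κ), (y ≠ x → a y • u = 0) → a y • a x • u = 0 := by
      intro u y hu
      rcases eq_or_ne y x with rfl | hyx
      · rw [smul_smul, h.ann_sq, zero_smul]
      · exact h.ann_smul_ann_smul_eq_zero x (hu hyx)
    have unoccupied : (l.map c).prod • a x • c x • v ∈ U :=
      ih l hl (fun y hy => (hlB y hy).2) _ fun y hy => ann_ann _ y fun hyx =>
        h.ann_smul_cre_smul_eq_zero hyx (hv y ⟨hyx, hy⟩)
    have occupied : ((l ++ [x]).map c).prod • a x • v ∈ U := by
      refine ih (l ++ [x]) ?_ ?_ _ fun y hy => ann_ann _ y fun hyx => hv y ⟨hyx, hy⟩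
      · exact List.nodup_append_comm.1 (List.nodup_cons.2 ⟨fun hxl => (hlB x hxl).1 rfl, hl⟩)
      · simpa [or_imp, forall_and] using ⟨fun y hy => (hlB y hy).2, hx⟩
    have decomposition : (l.map c).prod • v =
        (l.map c).prod • a x • c x • v + ((l ++ [x]).map c).prod • a x • v := by
      rw [List.map_append, List.map_singleton, List.prod_append, List.prod_singleton, mul_smul,
        ← smul_add, smul_smul, smul_smul, ← add_smul, h.ann_mul_cre_self_add, one_smul]
    exact decomposition ▸ U.add_mem unoccupied occupied

variable {M : Type*} {S : M → Finset κ} {T : M → R}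

theorem sumSMulHom_injective (h : IsCAR a c) (hT : ∀ m, IsSignedProduct c (S m) (T m))
    (hS : Function.Injective S) : Function.Injective (sumSMulHom T (vacuum a V)) := by
  rw [injective_iff_map_eq_zero]
  intro g hg
  by_contra hne
  obtain ⟨m, hm, hmax⟩ := g.support.exists_maximalFor S (Finsupp.support_nonempty_iff.2 hne)
  obtain ⟨d, d_smul, d_kill⟩ := h.exists_dual (hT m) V
  have d_other : ∀ m' ∈ g.support, m' ≠ m → d • T m' • (g m' : V) = 0 := by
    intro m' hm' hmm'
    have not_subset : ¬ S m ⊆ S m' := fun hsub => hmm' (hS ((hmax hm' hsub).antisymm hsub))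
    obtain ⟨x, hx, hx'⟩ := Finset.not_subset.1 not_subset
    exact d_kill x hx _ (h.ann_smul_signedProduct_smul_eq_zero (hT m') hx' ((g m').2 x))
  have g_eq : (g m : V) = 0 :=
    calc (g m : V) = d • T m • (g m : V) := (d_smul _ (g m).2).symm
      _ = ∑ m' ∈ g.support, d • T m' • (g m' : V) :=
        (Finset.sum_eq_single_of_mem m hm d_other).symm
      _ = d • sumSMulHom T (vacuum a V) g := Finset.smul_sum.symm
      _ = 0 := by rw [hg, smul_zero]
  exact Finsupp.mem_support_iff.1 hm (Subtype.ext g_eq)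

theorem range_sumSMulHom (h : IsCAR a c) (hT : ∀ m, IsSignedProduct c (S m) (T m))
    (hS : Function.Surjective S) :
    Set.range (sumSMulHom T (vacuum a V)) = {v | {x | a x • v ≠ 0}.Finite} := by
  classical
  ext v
  constructor
  · rintro ⟨g, rfl⟩
    refine (g.support.biUnion S).finite_toSet.subset fun x hx => ?_
    by_contra hxS
    simp only [Finset.mem_coe, Finset.mem_biUnion, not_exists, not_and] at hxS
    exact hx (Finset.smul_sum.trans <| Finset.sum_eq_zero fun m hm =>
      h.ann_smul_signedProduct_smul_eq_zero (hT m) (hxS m hm) ((g m).2 x))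
  · refine h.mem_of_forall_prod_cre_smul_mem (U := (sumSMulHom T (vacuum a V)).range) ?_
    intro l hl w hw
    obtain ⟨m, hm⟩ := hS l.toFinset
    have hl_prod : IsSignedProduct c (S m) (l.map c).prod :=
      .prod_map (by rw [hm, List.toFinset_val, hl.dedup])
    obtain ⟨ε, hε⟩ := hl_prod.exists_eq_units_smul h.cre_mul_cre (hT m)
    rw [hε, smul_assoc, Units.smul_def]
    have mem_range : T m • w ∈ (sumSMulHom T (vacuum a V)).range :=
      ⟨Finsupp.single m ⟨w, hw⟩, Finsupp.liftAddHom_apply_single _ _ _⟩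
    exact zsmul_mem mem_range _

end IsCAR

namespace MayaDiagram

variable {r : ℕ}

theorem idx_injective : Function.Injective (idx : MayaDiagram r → ℤ → Finset (Fin r)) := by
  rintro ⟨I, _, _⟩ ⟨J, _, _⟩ rfl
  rfl

theorem finite_setOf_mem_idx_iff_pos (m : MayaDiagram r) :
    {x : ℤ × Fin r | x.2 ∈ m.idx x.1 ↔ 0 < x.1}.Finite := by
  obtain ⟨k, hk⟩ := m.eventually_full
  obtain ⟨l, hl⟩ := m.eventually_empty
  refine ((Set.finite_Icc (min k 0) (max l 0)).prod Set.finite_univ).subset ?_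
  rintro ⟨a, i⟩ hx
  refine ⟨⟨?_, ?_⟩, Set.mem_univ i⟩ <;> by_contra! ha
  · have full : m.idx a = Finset.univ := hk a (by grind)
    grind
  · have empty : m.idx a = ∅ := hl a (by grind)
    grind

/-- A Maya diagram corresponds to the finite set of modes `(a, i)` at which it differs from the
vacuum diagram (`I_a = [r]` for `a ≤ 0` and `I_a = ∅` for `a > 0`): `i ∈ I_a` where `a > 0`,
or `i ∉ I_a` where `a ≤ 0`. -/
noncomputable def modesEquiv : MayaDiagram r ≃ Finset (ℤ × Fin r) where
  toFun m := m.finite_setOf_mem_idx_iff_pos.toFinset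
  invFun S :=
    { idx a := {i | (a, i) ∈ S ↔ 0 < a}
      eventually_full := by
        obtain ⟨k, hk⟩ := (S.finite_toSet.image Prod.fst).bddBelow
        refine ⟨min k 0, fun a ha => Finset.filter_true_of_mem fun i _ => ?_⟩
        have notMem : (a, i) ∉ S := fun hS => by grind [hk ⟨_, hS, rfl⟩]
        grind
      eventually_empty := by
        obtain ⟨k, hk⟩ := (S.finite_toSet.image Prod.fst).bddAbove
        refine ⟨max k 0, fun a ha => Finset.filter_false_of_mem fun i _ => ?_⟩
        have notMem : (a, i) ∉ S := fun hS => by grind [hk ⟨_, hS, rfl⟩]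
        grind }
  left_inv m := idx_injective <| by
    ext a i
    simp only [Set.Finite.mem_toFinset, Set.mem_ofPred_eq, Finset.mem_filter_univ]
    tauto
  right_inv S := by
    ext ⟨a, i⟩
    simp only [Set.Finite.mem_toFinset, Set.mem_ofPred_eq, Finset.mem_filter_univ]
    tauto

theorem mem_modesEquiv {m : MayaDiagram r} {x : ℤ × Fin r} :
    x ∈ modesEquiv m ↔ (x.2 ∈ m.idx x.1 ↔ 0 < x.1) :=
  Set.Finite.mem_toFinset _

theorem modesEquiv_eq_biUnion {m : MayaDiagram r} {N : ℕ} (hN : GoodCutoff m N) :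
    modesEquiv m =
      (Finset.range N).biUnion (fun t => {(N : ℤ) - t} ×ˢ m.idx ((N : ℤ) - t)) ∪
      (Finset.range (N + 1)).biUnion
        (fun t => {-(t : ℤ)} ×ˢ (Finset.univ \ m.idx (-(t : ℤ)))) := by
  obtain ⟨-, h_empty, h_full⟩ := hN
  ext ⟨a, i⟩
  simp only [mem_modesEquiv, Finset.mem_union, Finset.mem_biUnion, Finset.mem_range,
    Finset.mem_product, Finset.mem_singleton, Finset.mem_sdiff, Finset.mem_univ, true_and]
  rcases lt_or_ge 0 a with ha | ha
  · have le_cutoff : i ∈ m.idx a → a ≤ N := by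
      grind
    constructor
    · intro hi
      exact .inl ⟨(N - a).toNat, by grind, by grind, by grind⟩
    · grind
  · have neg_cutoff_lt : i ∉ m.idx a → -N < a := by
      grind
    constructor
    · intro hi
      exact .inr ⟨(-a).toNat, by grind, by grind, by grind⟩
    · grind

end MayaDiagram

namespace ERep

variable {r : ℕ} {V : Type*} [AddCommGroup V] (ρ : ERep r V)

/-- The operators whose common kernel is `W`, indexed by the modes `(a, i)`. -/
def annihilator (x : ℤ × Fin r) : AddMonoid.End V :=
  if 0 < x.1 then ρ.P x.1 x.2 else ρ.Q x.1 x.2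

/-- The operators out of which `Θ_𝔪` is composed, indexed by the modes `(a, i)`. -/
def creator (x : ℤ × Fin r) : AddMonoid.End V :=
  if 0 < x.1 then ρ.Q x.1 x.2 else ρ.P x.1 x.2

theorem isCAR_P_Q :
    IsCAR (fun x : ℤ × Fin r => ρ.P x.1 x.2) (fun x : ℤ × Fin r => ρ.Q x.1 x.2) where
  ann_sq _ := ρ.P_sq _ _
  cre_sq _ := ρ.Q_sq _ _
  ann_mul_ann _ _ := eq_neg_of_add_eq_zero_left (ρ.P_P _ _ _ _)
  cre_mul_cre _ _ := eq_neg_of_add_eq_zero_left (ρ.Q_Q _ _ _ _)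
  ann_mul_cre _ _ hxy := eq_neg_of_add_eq_zero_left <|
    (ρ.P_Q _ _ _ _).trans (if_neg fun h => hxy (Prod.ext h.2 h.1))
  ann_mul_cre_self_add _ := (ρ.P_Q _ _ _ _).trans (if_pos ⟨rfl, rfl⟩)

theorem isCAR_annihilator_creator : IsCAR ρ.annihilator ρ.creator :=
  ρ.isCAR_P_Q.particleHole (0 < ·.1)

theorem annihilator_of_pos {a : ℤ} (ha : 0 < a) (i : Fin r) : ρ.annihilator (a, i) = ρ.P a i :=
  if_pos ha

theorem annihilator_of_nonpos {a : ℤ} (ha : a ≤ 0) (i : Fin r) :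
    ρ.annihilator (a, i) = ρ.Q a i :=
  if_neg ha.not_gt

theorem mem_vacuum_annihilator_iff {v : V} :
    v ∈ vacuum ρ.annihilator V ↔ (∀ a : ℤ, 0 < a → ∀ i : Fin r, ρ.P a i v = 0) ∧
      (∀ a : ℤ, a ≤ 0 → ∀ i : Fin r, ρ.Q a i v = 0) := by
  constructor
  · intro hv
    exact ⟨fun a ha i => ρ.annihilator_of_pos ha i ▸ hv (a, i),
      fun a ha i => ρ.annihilator_of_nonpos ha i ▸ hv (a, i)⟩
  · rintro ⟨hP, hQ⟩ ⟨a, i⟩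
    rcases lt_or_ge 0 a with ha | ha
    · rw [ρ.annihilator_of_pos ha]
      exact hP a ha i
    · rw [ρ.annihilator_of_nonpos ha]
      exact hQ a ha i

theorem finite_annihilator_smul_ne_zero_iff {v : V} :
    {x | ρ.annihilator x • v ≠ 0}.Finite ↔
      (∃ k : ℤ, ∀ a : ℤ, a ≤ k → ∀ i : Fin r, ρ.Q a i v = 0) ∧
      (∃ k : ℤ, ∀ a : ℤ, k < a → ∀ i : Fin r, ρ.P a i v = 0) := by
  constructor
  · intro hv
    obtain ⟨k, hk⟩ := (hv.image Prod.fst).bddBelow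
    obtain ⟨l, hl⟩ := (hv.image Prod.fst).bddAbove
    refine ⟨⟨min (k - 1) 0, fun a ha i => ?_⟩, ⟨max l 0, fun a ha i => ?_⟩⟩ <;> by_contra hne
    · rw [← ρ.annihilator_of_nonpos (by omega)] at hne
      have : k ≤ a := hk ⟨(a, i), hne, rfl⟩
      omega
    · rw [← ρ.annihilator_of_pos (by omega)] at hne
      have : a ≤ l := hl ⟨(a, i), hne, rfl⟩
      omega
  · rintro ⟨⟨k, hQ⟩, ⟨l, hP⟩⟩
    refine ((Set.finite_Icc (min k 0) (max l 0)).prod Set.finite_univ).subset ?_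
    rintro ⟨a, i⟩ hne
    refine ⟨⟨?_, ?_⟩, Set.mem_univ i⟩ <;> by_contra! ha <;> refine hne ?_
    · rw [ρ.annihilator_of_nonpos (by omega)]
      exact hQ a (by omega) i
    · rw [ρ.annihilator_of_pos (by omega)]
      exact hP a (by omega) i

end ERep

section Theta

variable {r : ℕ} {V : Type*} [AddCommGroup V]

theorem isSignedProduct_qaProd (ρ : ERep r V) {a : ℤ} (ha : 0 < a) (I : Finset (Fin r)) :
    IsSignedProduct ρ.creator ({a} ×ˢ I) (qaProd ρ.Q a I) := by
  have creator_eq : ρ.Q a = fun i => ρ.creator (a, i) := funext fun i => (if_pos ha).symm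
  rw [qaProd, creator_eq]
  exact IsSignedProduct.prod_map_mk a (Finset.sort_eq _ _)

theorem isSignedProduct_paProd (ρ : ERep r V) {a : ℤ} (ha : a ≤ 0) (I : Finset (Fin r)) :
    IsSignedProduct ρ.creator ({a} ×ˢ I) (paProd ρ.P a I) := by
  have creator_eq : ρ.P a = fun i => ρ.creator (a, i) :=
    funext fun i => (if_neg ha.not_gt).symm
  rw [paProd, creator_eq]
  exact IsSignedProduct.prod_map_mk a (by rw [Multiset.coe_reverse, Finset.sort_eq])

theorem exists_units_coe_eq_mayaSign (m : MayaDiagram r) : ∃ ε : ℤˣ, (ε : ℤ) = mayaSign m :=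
  ⟨(-1) ^ _, by rw [mayaSign, Units.val_pow_eq_pow_val, Units.val_neg, Units.val_one]⟩

-- The lists in the definition of `Theta` elaborate to `List.range` cast to `List ℤ`.
theorem theta_eq (ρ : ERep r V) (m : MayaDiagram r) (N : ℕ) :
    Theta ρ m N = mayaSign m •
      (((List.range N).map fun t : ℕ => qaProd ρ.Q (N - t) (m.idx (N - t))).prod *
        ((List.range (N + 1)).map fun t : ℕ =>
          paProd ρ.P (-t) (Finset.univ \ m.idx (-t))).prod) := by
  simp only [Theta, bind_pure_comp, List.map_eq_map, List.map_map, Function.comp_def]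

theorem isSignedProduct_theta (ρ : ERep r V) {m : MayaDiagram r} {N : ℕ} (hN : GoodCutoff m N) :
    IsSignedProduct ρ.creator (MayaDiagram.modesEquiv m) (Theta ρ m N) := by
  obtain ⟨ε, hε⟩ := exists_units_coe_eq_mayaSign m
  rw [theta_eq, ← hε, MayaDiagram.modesEquiv_eq_biUnion hN]
  refine ((IsSignedProduct.prod_range ?_ N ?_).mul
    (IsSignedProduct.prod_range ?_ (N + 1) ?_) ?_).units_smul ε
  · exact pairwise_disjoint_singleton_product (fun s t hst => by grind) _
  · exact fun t ht => isSignedProduct_qaProd ρ (by omega) _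
  · exact pairwise_disjoint_singleton_product (fun s t hst => by grind) _
  · exact fun t _ => isSignedProduct_paProd ρ (by omega) _
  · simp only [Finset.disjoint_biUnion_left, Finset.disjoint_biUnion_right, Finset.mem_range]
    exact fun s _ t _ => Finset.disjoint_product.2 (.inl (Finset.disjoint_singleton.2 (by omega)))

theorem qaProd_empty (Q : ℤ → Fin r → AddMonoid.End V) (a : ℤ) : qaProd Q a ∅ = 1 := by
  rw [qaProd, Finset.sort_empty, List.map_nil, List.prod_nil]

theorem paProd_empty (P : ℤ → Fin r → AddMonoid.End V) (a : ℤ) : paProd P a ∅ = 1 := by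
  rw [paProd, Finset.sort_empty, List.reverse_nil, List.map_nil, List.prod_nil]

theorem GoodCutoff.mono {m : MayaDiagram r} {N N' : ℕ} (hN : GoodCutoff m N) (hNN' : N ≤ N') :
    GoodCutoff m N' :=
  ⟨hN.1.trans hNN', fun a ha => hN.2.1 a (by omega), fun a ha => hN.2.2 a (by omega)⟩

theorem theta_succ (ρ : ERep r V) {m : MayaDiagram r} {N : ℕ} (hN : GoodCutoff m N) :
    Theta ρ m (N + 1) = Theta ρ m N := by
  have top_empty : m.idx (((N + 1 : ℕ) : ℤ) - (0 : ℕ)) = ∅ := hN.2.1 _ (by omega)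
  have bottom_full : m.idx (-((N + 1 : ℕ) : ℤ)) = Finset.univ := hN.2.2 _ (by omega)
  have shift (t : ℕ) : ((N + 1 : ℕ) : ℤ) - (t + 1 : ℕ) = N - t := by omega
  rw [theta_eq, theta_eq, List.prod_range_succ', List.prod_range_succ _ (N + 1), top_empty,
    bottom_full, sdiff_self, Finset.bot_eq_empty, qaProd_empty, paProd_empty, one_mul, mul_one]
  simp only [shift]

theorem theta_eq_of_le (ρ : ERep r V) {m : MayaDiagram r} {N N' : ℕ} (hN : GoodCutoff m N)
    (hNN' : N ≤ N') : Theta ρ m N' = Theta ρ m N := by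
  induction N', hNN' using Nat.le_induction with
  | base => rfl
  | succ N' hNN' ih => rw [theta_succ ρ (hN.mono hNN'), ih]

theorem theta_eq_of_goodCutoff (ρ : ERep r V) {m : MayaDiagram r} {N₁ N₂ : ℕ}
    (h₁ : GoodCutoff m N₁) (h₂ : GoodCutoff m N₂) : Theta ρ m N₁ = Theta ρ m N₂ := by
  rw [← theta_eq_of_le ρ h₁ (le_max_left N₁ N₂), theta_eq_of_le ρ h₂ (le_max_right N₁ N₂)]

end Theta

/-!
Statement 18: the map `⊕_m W → V`, `(w_m)_m ↦ Σ_m Θ_m(w_m)`, is injective with image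
`𝓚_{−∞}(V) ∩ 𝓗_∞(V)`; moreover `Θ_m` does not depend on the choice of cutoff `N`.
-/

theorem stmt_18 {r : ℕ} (hr : 0 < r) {V : Type} [AddCommGroup V] (ρ : ERep r V)
    (W : AddSubgroup V)
    (hW : ∀ v : V, v ∈ W ↔ ((∀ a : ℤ, 0 < a → ∀ i : Fin r, ρ.P a i v = 0) ∧
      (∀ a : ℤ, a ≤ 0 → ∀ i : Fin r, ρ.Q a i v = 0)))
    (Nc : MayaDiagram r → ℕ) (hNc : ∀ m : MayaDiagram r, GoodCutoff m (Nc m)) :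
    -- independence of the choice of cutoff
    (∀ (m : MayaDiagram r) (N₁ N₂ : ℕ), GoodCutoff m N₁ → GoodCutoff m N₂ →
      Theta ρ m N₁ = Theta ρ m N₂) ∧
    -- the direct-sum map is injective …
    Function.Injective
      (fun g : MayaDiagram r →₀ W => g.sum (fun m w => Theta ρ m (Nc m) (w : V))) ∧
    -- … with image exactly `𝓚_{−∞}(V) ∩ 𝓗_∞(V)`
    Set.range
        (fun g : MayaDiagram r →₀ W => g.sum (fun m w => Theta ρ m (Nc m) (w : V))) =
      {v : V | ∃ k : ℤ, ∀ a : ℤ, a ≤ k → ∀ i : Fin r, ρ.Q a i v = 0} ∩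
        {v : V | ∃ k : ℤ, ∀ a : ℤ, k < a → ∀ i : Fin r, ρ.P a i v = 0} := by
  obtain rfl : W = vacuum ρ.annihilator V := by
    ext v
    rw [hW, ρ.mem_vacuum_annihilator_iff]
  have car := ρ.isCAR_annihilator_creator
  have hTheta (m : MayaDiagram r) := isSignedProduct_theta ρ (hNc m)
  refine ⟨fun m N₁ N₂ => theta_eq_of_goodCutoff ρ, ?_, ?_⟩
  · exact car.sumSMulHom_injective hTheta MayaDiagram.modesEquiv.injective
  · refine (car.range_sumSMulHom hTheta MayaDiagram.modesEquiv.surjective).trans ?_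
    ext v
    exact ρ.finite_annihilator_smul_ne_zero_iff
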